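/- Let G be a cubic graph on at least seven vertices. Then G contains two vertex-disjoint cycles. -/

import Mathlib

open Finset in
/-- Number of neighbours of `v` in `S`. -/
def dg {V : Type} (G : SimpleGraph V) [DecidableRel G.Adj] (S : Finset V) (v : V) : ℕ :=
  ∑ u ∈ S, if G.Adj v u then 1 else 0

/-- Twice the number of edges inside `S`. -/
def dsum {V : Type} (G : SimpleGraph V) [DecidableRel G.Adj] (S : Finset V) : ℕ :=
  ∑ v ∈ S, dg G S v

/-- A nonempty set all of whose vertices have at least two neighbours inside. -/
def Good {V : Type} (G : SimpleGraph V) [DecidableRel G.Adj] (S : Finset V) : Prop :=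
  S.Nonempty ∧ ∀ v ∈ S, 2 ≤ dg G S v

theorem not_acyclic_of_two {W : Type} [Finite W] [Nonempty W] (H : SimpleGraph W)
    (h : ∀ v, ∃ a b, a ≠ b ∧ H.Adj v a ∧ H.Adj v b) : ¬ H.IsAcyclic := by
  classical
  intro hac
  have := Fintype.ofFinite W
  have key : ∀ k : ℕ, ∃ (u v : W) (p : H.Walk u v), p.IsPath ∧ p.length = k := by
    intro k
    induction k with
    | zero =>
      obtain ⟨v⟩ := ‹Nonempty W›
      exact ⟨v, v, .nil, .nil, rfl⟩
    | succ k ih =>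
      obtain ⟨u, v, p, hp, hl⟩ := ih
      have : ∃ w, H.Adj u w ∧ w ≠ p.snd := by
        obtain ⟨a, b, hab, ha, hb⟩ := h u
        by_cases hh : a = p.snd
        · exact ⟨b, hb, fun h' => hab (hh.trans h'.symm)⟩
        · exact ⟨a, ha, hh⟩
      obtain ⟨w, hw, hne⟩ := this
      have hns : w ∉ p.support := fun hs => hne (hac.eq_snd_of_adj_start hp hw hs)
      exact ⟨w, v, .cons hw.symm p, hp.cons hns, by simp [hl]⟩
  obtain ⟨u, v, p, hp, hl⟩ := key (Fintype.card W)
  have := hp.length_lt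
  omega

section
variable {V : Type} [DecidableEq V] (G : SimpleGraph V) [DecidableRel G.Adj]

theorem dg_eq_card (S : Finset V) (v : V) : dg G S v = (S.filter (G.Adj v)).card := by
  rw [Finset.card_filter]; rfl

theorem two_of_dg {S : Finset V} {v : V} (h : 2 ≤ dg G S v) :
    ∃ a ∈ S, ∃ b ∈ S, a ≠ b ∧ G.Adj v a ∧ G.Adj v b := by
  rw [dg_eq_card] at h
  obtain ⟨a, ha, b, hb, hab⟩ := Finset.one_lt_card.mp h
  rw [Finset.mem_filter] at ha hb
  exact ⟨a, ha.1, b, hb.1, hab, ha.2, hb.2⟩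

theorem Good.cycle {S : Finset V} (h : Good G S) :
    ∃ (a : V) (c : G.Walk a a), c.IsCycle ∧ ∀ v ∈ c.support, v ∈ S := by
  obtain ⟨⟨x, hx⟩, h2⟩ := h
  have : Nonempty (S : Set V) := ⟨⟨x, hx⟩⟩
  have hn := not_acyclic_of_two (G.induce (S : Set V)) (by
    rintro ⟨v, hv⟩
    obtain ⟨a, ha, b, hb, hab, h1, h2⟩ := two_of_dg G (h2 v hv)
    exact ⟨⟨a, ha⟩, ⟨b, hb⟩, by simpa using hab, by simpa using h1, by simpa using h2⟩)
  unfold SimpleGraph.IsAcyclic at hn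
  push Not at hn
  obtain ⟨a, c, hc⟩ := hn
  refine ⟨_, c.map (SimpleGraph.Embedding.induce (G := G) (S : Set V)).toHom,
    (SimpleGraph.Walk.isCycle_map_iff_of_injective
      (SimpleGraph.Embedding.induce (G := G) (S : Set V)).injective).mpr hc, ?_⟩
  intro v hv
  rw [SimpleGraph.Walk.support_map, List.mem_map] at hv
  obtain ⟨w, _, rfl⟩ := hv
  exact w.2

theorem dg_insert {S : Finset V} {v : V} (hv : v ∉ S) (u : V) :
    dg G (insert v S) u = dg G S u + if G.Adj u v then 1 else 0 := by
  unfold dg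
  rw [Finset.sum_insert hv, add_comm]

theorem dsum_insert {S : Finset V} {v : V} (hv : v ∉ S) :
    dsum G (insert v S) = dsum G S + 2 * dg G S v := by
  have h1 : ∑ u ∈ S, (if G.Adj u v then 1 else 0) = dg G S v := by
    unfold dg
    exact Finset.sum_congr rfl fun u _ => by simp only [G.adj_comm]
  unfold dsum
  rw [Finset.sum_insert hv, dg_insert G hv, Finset.sum_congr rfl fun u _ => dg_insert G hv u,
    Finset.sum_add_distrib, h1]
  simp
  ring

theorem dg_erase {S : Finset V} {v : V} (hv : v ∈ S) (u : V) :
    dg G S u = dg G (S.erase v) u + if G.Adj u v then 1 else 0 := by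
  conv_lhs => rw [← Finset.insert_erase hv]
  exact dg_insert G (Finset.notMem_erase v S) u

theorem dsum_erase {S : Finset V} {v : V} (hv : v ∈ S) :
    dsum G S = dsum G (S.erase v) + 2 * dg G S v := by
  have h := dsum_insert G (Finset.notMem_erase v S)
  rw [Finset.insert_erase hv] at h
  rw [h, dg_erase G hv v]
  simp

theorem peel (S : Finset V) : S.Nonempty → 2 * S.card ≤ dsum G S → ∃ T ⊆ S, Good G T := by
  induction S using Finset.strongInduction with
  | H S ih =>
    intro hne hS
    by_cases hg : Good G S
    · exact ⟨S, subset_rfl, hg⟩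
    · have : ∃ v ∈ S, dg G S v < 2 := by
        by_contra hcon
        push Not at hcon
        exact hg ⟨hne, hcon⟩
      obtain ⟨v, hv, hlt⟩ := this
      have hc := Finset.card_erase_add_one hv
      have hd := dsum_erase G hv
      by_cases he : (S.erase v).Nonempty
      · obtain ⟨T, hT, hTg⟩ := ih _ (Finset.erase_ssubset hv) he (by omega)
        exact ⟨T, hT.trans (Finset.erase_subset v S), hTg⟩
      · exfalso
        rw [Finset.not_nonempty_iff_eq_empty] at he
        have h1 := dg_erase G hv v
        rw [he] at h1 hd hc
        simp [dg] at h1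
        simp [dsum] at hd
        simp at hc
        simp only [dg] at hd
        unfold dsum at hS
        simp only [dg] at hS
        have : ∀ (A : Finset V), A = S → ∑ x ∈ A, dg G A x = 0 → False := by
          intro A hA h0
          subst hA
          simp only [dg] at h0
          omega
        apply this (insert v ∅) (by rw [← he]; exact Finset.insert_erase hv)
        simp [dg]

theorem dg_le_card (S : Finset V) (v : V) : dg G S v ≤ S.card := by
  rw [dg_eq_card]; exact Finset.card_filter_le _ _

theorem cross (S T : Finset V) : ∑ v ∈ S, dg G T v = ∑ v ∈ T, dg G S v := by
  unfold dg
  rw [Finset.sum_comm]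
  exact Finset.sum_congr rfl fun _ _ => Finset.sum_congr rfl fun _ _ => by simp only [G.adj_comm]

/-- A smallest good set in a graph of maximum degree three induces a two-regular graph. -/
theorem min_regular {S : Finset V} (hS : Good G S) (hmax : ∀ v, dg G S v ≤ 3)
    (key : ∀ A : Finset V, A.Nonempty → A.card < S.card → dsum G A + 2 ≤ 2 * A.card) :
    ∀ v ∈ S, dg G S v = 2 := by
  have hlow : 2 * S.card ≤ dsum G S := by
    unfold dsum
    have := Finset.card_nsmul_le_sum S (dg G S) 2 hS.2
    rw [smul_eq_mul] at this
    calc 2 * S.card = S.card * 2 := mul_comm _ _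
      _ ≤ _ := this
  have hbound : ∀ v ∈ S, dsum G S + 4 ≤ 2 * S.card + 2 * dg G S v := by
    intro v hv
    have h2 := hS.2 v hv
    have hc := Finset.card_erase_add_one hv
    have hl := dg_le_card G S v
    have hk := key (S.erase v) (Finset.card_pos.mp (by omega)) (by omega)
    have := dsum_erase G hv
    omega
  have hup : dsum G S ≤ 2 * S.card := by
    by_cases h : ∃ v ∈ S, dg G S v = 2
    · obtain ⟨v, hv, h⟩ := h
      have := hbound v hv
      omega
    · exfalso
      push Not at h
      have h3 : ∀ v ∈ S, dg G S v = 3 := by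
        intro v hv
        have := h v hv
        have := hS.2 v hv
        have := hmax v
        omega
      have hd : dsum G S = 3 * S.card := by
        unfold dsum
        rw [Finset.sum_congr rfl h3]; simp [mul_comm]
      obtain ⟨v, hv⟩ := hS.1
      have := hbound v hv
      have := h3 v hv
      have := dg_le_card G S v
      omega
  intro v hv
  have hsum : ∑ _v ∈ S, 2 = ∑ v ∈ S, dg G S v := by
    unfold dsum at *
    simp only [Finset.sum_const, smul_eq_mul]
    omega
  exact ((Finset.sum_eq_sum_iff_of_le hS.2).mp hsum v hv).symm

theorem outer_le_one {S : Finset V} (h2 : ∀ v ∈ S, dg G S v = 2)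
    (key : ∀ A : Finset V, A.Nonempty → A.card < S.card → dsum G A + 2 ≤ 2 * A.card)
    (h5 : 5 ≤ S.card) {x : V} (hx : x ∉ S) : dg G S x ≤ 1 := by
  by_contra hcon
  obtain ⟨u, hu, w, hw, huw, hxu, hxw⟩ := two_of_dg G (show 2 ≤ dg G S x by omega)
  have hD : dsum G S = 2 * S.card := by
    unfold dsum
    rw [Finset.sum_congr rfl h2]; simp [mul_comm]
  have hw' : w ∈ S.erase u := Finset.mem_erase.mpr ⟨huw.symm, hw⟩
  have e1 := dsum_erase G hu
  have e2 := dsum_erase G hw'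
  have e3 := dg_erase G hu w
  have := h2 u hu
  have := h2 w hw
  have hpos : 0 < dsum G ((S.erase u).erase w) := by omega
  unfold dsum at hpos
  obtain ⟨p, hp, hpp⟩ := Finset.exists_ne_zero_of_sum_ne_zero hpos.ne'
  unfold dg at hpp
  obtain ⟨q, hq, hqq⟩ := Finset.exists_ne_zero_of_sum_ne_zero hpp
  have hpq : G.Adj p q := by
    by_contra h; simp [h] at hqq
  simp only [Finset.mem_erase] at hp hq
  have hq' : q ∈ S.erase p := Finset.mem_erase.mpr ⟨hpq.ne', hq.2.2⟩
  have f1 := dsum_erase G hp.2.2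
  have f2 := dsum_erase G hq'
  have f3 := dg_erase G hp.2.2 q
  rw [if_pos hpq.symm] at f3
  have := h2 p hp.2.2
  have := h2 q hq.2.2
  have c1 := Finset.card_erase_add_one hp.2.2
  have c2 := Finset.card_erase_add_one hq'
  set B := (S.erase p).erase q with hB
  have hxB : x ∉ B := fun h => hx (by simp only [hB, Finset.mem_erase] at h; exact h.2.2)
  have f4 := dsum_insert G hxB
  have c3 := Finset.card_insert_of_notMem hxB
  have f5 : 2 ≤ dg G B x := by
    rw [dg_eq_card]
    refine Finset.one_lt_card.mpr ⟨u, ?_, w, ?_, huw⟩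
    · simp only [hB, Finset.mem_filter, Finset.mem_erase]
      exact ⟨⟨hq.2.1.symm, hp.2.1.symm, hu⟩, hxu⟩
    · simp only [hB, Finset.mem_filter, Finset.mem_erase]
      exact ⟨⟨hq.1.symm, hp.1.symm, hw⟩, hxw⟩
  have := key (insert x B) (Finset.insert_nonempty _ _) (by omega)
  omega

end

/-- Every cubic graph on at least seven vertices contains two vertex-disjoint cycles. -/
theorem stmt_1 {V : Type} [Fintype V] [DecidableEq V] (G : SimpleGraph V)
    [DecidableRel G.Adj]
    (hcubic : ∀ v : V, G.degree v = 3)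
    (hcard : 7 ≤ Fintype.card V) :
    ∃ (a b : V) (c₁ : G.Walk a a) (c₂ : G.Walk b b),
      c₁.IsCycle ∧ c₂.IsCycle ∧ ∀ v ∈ c₁.support, v ∉ c₂.support := by
  classical
  have hdeg : ∀ v, dg G Finset.univ v = 3 := by
    intro v
    rw [dg_eq_card, ← SimpleGraph.neighborFinset_eq_filter]
    exact hcubic v
  have huniv : Good G Finset.univ :=
    ⟨Finset.card_pos.mp (by rw [Finset.card_univ]; omega), fun v _ => by rw [hdeg]; omega⟩
  obtain ⟨S, hSm, hmin⟩ := Finset.exists_min_image (Finset.univ.filter (Good G)) Finset.card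
    ⟨Finset.univ, by simpa using huniv⟩
  have hS : Good G S := by simpa using hSm
  replace hmin : ∀ T, Good G T → S.card ≤ T.card := fun T hT => hmin T (by simpa using hT)
  have heven : ∀ B : Finset V, Even (dsum G B) := by
    intro B
    induction B using Finset.induction_on with
    | empty => simp [dsum]
    | insert a s ha ih => rw [dsum_insert G ha]; exact ih.add (even_two_mul _)
  have key : ∀ A : Finset V, A.Nonempty → A.card < S.card → dsum G A + 2 ≤ 2 * A.card := by
    intro A hA hlt
    by_contra hcon
    obtain ⟨k, hk⟩ := heven A
    obtain ⟨T, hT, hTg⟩ := peel G A hA (by omega)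
    have := hmin T hTg
    have := Finset.card_le_card hT
    omega
  have hsplit : ∀ v, dg G S v + dg G Sᶜ v = 3 := by
    intro v
    rw [← hdeg v]
    exact Finset.sum_add_sum_compl S _
  have h2 := min_regular G hS (fun v => by have := hsplit v; omega) key
  by_cases hT : ∃ T ⊆ Sᶜ, Good G T
  · obtain ⟨T, hTs, hT⟩ := hT
    obtain ⟨a, c₁, hc₁, h₁⟩ := hS.cycle
    obtain ⟨b, c₂, hc₂, h₂⟩ := hT.cycle
    exact ⟨a, b, c₁, c₂, hc₁, hc₂, fun v hv hv' =>
      Finset.mem_compl.mp (hTs (h₂ v hv')) (h₁ v hv)⟩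
  · exfalso
    have hcr := cross G S Sᶜ
    have h1 : ∑ v ∈ S, dg G Sᶜ v = S.card := by
      rw [Finset.card_eq_sum_ones]
      exact Finset.sum_congr rfl fun v hv => by
        have := hsplit v
        have := h2 v hv
        omega
    have h3 : ∑ v ∈ Sᶜ, dg G S v + dsum G Sᶜ = 3 * Sᶜ.card := by
      unfold dsum
      rw [← Finset.sum_add_distrib, Finset.sum_congr rfl fun v _ => hsplit v]
      simp [mul_comm]
    have hpos := Finset.card_pos.mpr hS.1
    have hcc := Finset.card_add_card_compl S
    have hlt : dsum G Sᶜ < 2 * Sᶜ.card := by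
      by_contra hcon
      exact hT (peel G _ (Finset.card_pos.mp (by omega)) (by omega))
    obtain ⟨k, hk⟩ := heven Sᶜ
    have h5 : 5 ≤ S.card := by omega
    have h6 : ∑ v ∈ Sᶜ, dg G S v ≤ Sᶜ.card := by
      rw [Finset.card_eq_sum_ones]
      exact Finset.sum_le_sum fun v hv =>
        outer_le_one G h2 key h5 (Finset.mem_compl.mp hv)
    omega
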